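/- Let p and q be FNM guarded processes (syntactic category s). If p ~sp q, then (i) a̲.p ~sp a̲.q for every input action a ∈ L, and (ii) p + r ~sp q + r for every FNM guarded process r. (Structure-preserving bisimilarity is a congruence for strong prefixing and for choice.) -/

import Mathlib

/-- Actions of FNM: the invisible action τ, input actions `a ∈ L` and
output actions `ā ∈ L̄` (here `α` plays the role of the finite set `L`). -/
inductive Act (α : Type) where
  | tau : Act α
  | inp : α → Act α
  | out : α → Act α
  deriving DecidableEq

/-- (Open) FNM terms: `0`, the variable `x`, action prefixing `mu.t`, strong
prefixing `a̲.s`, choice `s+s`, constants `C`, parallel `t|t` and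
restriction `(νa)p`.  The syntactic categories are carved out below. -/
inductive FNM (α κ : Type) where
  | nil : FNM α κ
  | var : FNM α κ
  | pref : Act α → FNM α κ → FNM α κ
  | spref : α → FNM α κ → FNM α κ
  | sum : FNM α κ → FNM α κ → FNM α κ
  | const : κ → FNM α κ
  | par : FNM α κ → FNM α κ → FNM α κ
  | res : α → FNM α κ → FNM α κ
  deriving DecidableEq

namespace FNM

variable {α κ : Type}

mutual
  /-- Guarded terms: syntactic category `s ::= 0 | mu.t | a̲.s | s+s`
  (with `t` restriction-free). -/
  def Grd : FNM α κ → Prop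
    | .nil => True
    | .var => False
    | .pref _ t => RF t
    | .spref _ s => Grd s
    | .sum s1 s2 => Grd s1 ∧ Grd s2
    | .const _ => False
    | .par _ _ => False
    | .res _ _ => False
  /-- Restriction-free terms: syntactic category `t ::= q | t|t`, where
  `q ::= s | C | x` is the category of sequential terms. -/
  def RF : FNM α κ → Prop
    | .nil => True
    | .var => True
    | .pref _ t => RF t
    | .spref _ s => Grd s
    | .sum s1 s2 => Grd s1 ∧ Grd s2
    | .const _ => True
    | .par t1 t2 => RF t1 ∧ RF t2
    | .res _ _ => False
end

/-- Sequential terms: `q ::= s | C | x`. -/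
def Seq (t : FNM α κ) : Prop :=
  Grd t ∨ (∃ c, t = FNM.const c) ∨ t = FNM.var

/-- General terms: `p ::= t | (νa)p`. -/
def Gen : FNM α κ → Prop
  | .res _ p => Gen p
  | t => RF t

/-- Closed terms: no occurrence of the variable. -/
def VarFree : FNM α κ → Prop
  | .nil => True
  | .var => False
  | .pref _ t => VarFree t
  | .spref _ s => VarFree s
  | .sum s1 s2 => VarFree s1 ∧ VarFree s2
  | .const _ => True
  | .par t1 t2 => VarFree t1 ∧ VarFree t2
  | .res _ p => VarFree p

/-- Substitution `p{r/x}` of the term `r` for every occurrence of the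
variable `x` in `p` (constants are dealt with via the environment). -/
def subst (r : FNM α κ) : FNM α κ → FNM α κ
  | .nil => .nil
  | .var => r
  | .pref mu t => .pref mu (subst r t)
  | .spref a s => .spref a (subst r s)
  | .sum s1 s2 => .sum (subst r s1) (subst r s2)
  | .const c => .const c
  | .par t1 t2 => .par (subst r t1) (subst r t2)
  | .res a p => .res a (subst r p)

/-- `mu` uses the name `a`. -/
def _root_.Act.uses (a : α) : Act α → Prop
  | .tau => False
  | .inp b => b = a
  | .out b => b = a

/-- `a` occurs free in a term (through an environment `env` giving the body
of each process constant). -/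
inductive FreeIn (env : κ → FNM α κ) (a : α) : FNM α κ → Prop where
  | pref_act {mu : Act α} {t : FNM α κ} : mu.uses a → FreeIn env a (.pref mu t)
  | pref_cont {mu : Act α} {t : FNM α κ} : FreeIn env a t → FreeIn env a (.pref mu t)
  | spref_act {s : FNM α κ} : FreeIn env a (.spref a s)
  | spref_cont {b : α} {s : FNM α κ} : FreeIn env a s → FreeIn env a (.spref b s)
  | sum_l {s1 s2 : FNM α κ} : FreeIn env a s1 → FreeIn env a (.sum s1 s2)
  | sum_r {s1 s2 : FNM α κ} : FreeIn env a s2 → FreeIn env a (.sum s1 s2)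
  | par_l {t1 t2 : FNM α κ} : FreeIn env a t1 → FreeIn env a (.par t1 t2)
  | par_r {t1 t2 : FNM α κ} : FreeIn env a t2 → FreeIn env a (.par t1 t2)
  | res {b : α} {p : FNM α κ} : a ≠ b → FreeIn env a p → FreeIn env a (.res b p)
  | const {c : κ} : FreeIn env a (env c) → FreeIn env a (.const c)

/-- `a` occurs bound (by a restriction) in a term. -/
inductive BoundIn (env : κ → FNM α κ) (a : α) : FNM α κ → Prop where
  | res_here {p : FNM α κ} : BoundIn env a (.res a p)
  | res_in {b : α} {p : FNM α κ} : BoundIn env a p → BoundIn env a (.res b p)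
  | pref {mu : Act α} {t : FNM α κ} : BoundIn env a t → BoundIn env a (.pref mu t)
  | spref {b : α} {s : FNM α κ} : BoundIn env a s → BoundIn env a (.spref b s)
  | sum_l {s1 s2 : FNM α κ} : BoundIn env a s1 → BoundIn env a (.sum s1 s2)
  | sum_r {s1 s2 : FNM α κ} : BoundIn env a s2 → BoundIn env a (.sum s1 s2)
  | par_l {t1 t2 : FNM α κ} : BoundIn env a t1 → BoundIn env a (.par t1 t2)
  | par_r {t1 t2 : FNM α κ} : BoundIn env a t2 → BoundIn env a (.par t1 t2)
  | const {c : κ} : BoundIn env a (env c) → BoundIn env a (.const c)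

end FNM

/-- A place of the net `N_FNM`: a sequential (extended) term, rendered as a
pure sequential term together with the record `ρ : α → Bool` of which names
have been replaced by their restricted counterparts (`ρ a = true` represents
the substitution `{a'/a}`). -/
abbrev Place (α κ : Type) := FNM α κ × (α → Bool)

namespace FNM

variable {α κ : Type} [DecidableEq α] [DecidableEq κ] [Fintype α]

/-- The decomposition function `dec`, mapping (extended) terms to markings:
`dec(0) = θ`, `dec(p|q) = dec(p) ⊕ dec(q)`, `dec((νa)p) = dec(p){a'/a}`, and
a sequential term other than `0` is mapped to a single place. -/
def dec (ρ : α → Bool) : FNM α κ → Multiset (Place α κ)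
  | .nil => 0
  | .par t1 t2 => dec ρ t1 + dec ρ t2
  | .res a p => dec (Function.update ρ a true) p
  | t => {(t, ρ)}

end FNM

/-- Extended visible actions: inputs and outputs, possibly restricted
(`inp a true` represents `a'`, `out a false` represents `ā`, etc.). -/
inductive XAct (α : Type) where
  | inp : α → Bool → XAct α
  | out : α → Bool → XAct α

/-- Labels of net transitions: `τ` is the empty sequence, and otherwise a
sequence of extended actions. -/
abbrev Lbl (α : Type) := List (XAct α)

/-- An extended action carries no restricted name. -/
def XAct.unres {α : Type} : XAct α → Prop
  | .inp _ r => r = false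
  | .out _ r => r = false

/-- The label contributed by prefix `mu` under the restriction record `ρ`. -/
def actL {α : Type} (ρ : α → Bool) : Act α → Lbl α
  | .tau => []
  | .inp a => [XAct.inp a (ρ a)]
  | .out a => [XAct.out a (ρ a)]

/-- The synchronization relation `Sync(σ1, σ2, σ)`: `Sync(α, ᾱ, τ)`,
`Sync(aσ, ā, σ)` and `Sync(ā, aσ, σ)` for `σ ≠ ε` (also on restricted
actions). -/
inductive Sync {α : Type} : Lbl α → Lbl α → Lbl α → Prop where
  | inout (a : α) (r : Bool) : Sync [XAct.inp a r] [XAct.out a r] []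
  | outin (a : α) (r : Bool) : Sync [XAct.out a r] [XAct.inp a r] []
  | seqL (a : α) (r : Bool) (σ : Lbl α) :
      σ ≠ [] → Sync (XAct.inp a r :: σ) [XAct.out a r] σ
  | seqR (a : α) (r : Bool) (σ : Lbl α) :
      σ ≠ [] → Sync [XAct.out a r] (XAct.inp a r :: σ) σ

namespace FNM

variable {α κ : Type} [DecidableEq α] [DecidableEq κ] [Fintype α]

/-- A marking is admissible if for no name `a` both `a` and its restricted
counterpart `a'` occur free in it. -/
def Adm (env : κ → FNM α κ) (m : Multiset (Place α κ)) : Prop :=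
  ∀ a : α, ¬ ((∃ p ∈ m, FreeIn env a p.1 ∧ p.2 a = false) ∧
              (∃ p ∈ m, FreeIn env a p.1 ∧ p.2 a = true))

/-- The net transitions of `N_FNM`, generated by the rules (pref), (sum₁),
(sum₂), (cons), (s-pref) and (s-com). -/
inductive Tr (env : κ → FNM α κ) :
    Multiset (Place α κ) → Lbl α → Multiset (Place α κ) → Prop where
  | pref (ρ : α → Bool) (mu : Act α) (t : FNM α κ) :
      Tr env {(FNM.pref mu t, ρ)} (actL ρ mu) (dec ρ t)
  | sum1 (ρ : α → Bool) (s1 s2 : FNM α κ) (σ : Lbl α) (m : Multiset (Place α κ)) :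
      Tr env (dec ρ s1) σ m → Tr env {(FNM.sum s1 s2, ρ)} σ m
  | sum2 (ρ : α → Bool) (s1 s2 : FNM α κ) (σ : Lbl α) (m : Multiset (Place α κ)) :
      Tr env (dec ρ s2) σ m → Tr env {(FNM.sum s1 s2, ρ)} σ m
  | cons (ρ : α → Bool) (c : κ) (σ : Lbl α) (m : Multiset (Place α κ)) :
      Tr env (dec ρ (env c)) σ m → Tr env {(FNM.const c, ρ)} σ m
  | spref (ρ : α → Bool) (a : α) (s : FNM α κ) (σ : Lbl α) (m : Multiset (Place α κ)) :
      Tr env (dec ρ s) σ m →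
      Tr env {(FNM.spref a s, ρ)} (XAct.inp a (ρ a) :: σ) m
  | scom (m1 m2 m1' m2' : Multiset (Place α κ)) (σ1 σ2 σ : Lbl α) :
      Tr env m1 σ1 m1' → Tr env m2 σ2 m2' →
      Adm env (m1 + m2) → Sync σ1 σ2 σ →
      Tr env (m1 + m2) σ (m1' + m2')

/-- Tritions of the net `N_FNM`: only those whose label contains no
restricted action are kept. -/
def NetTr (env : κ → FNM α κ) (m : Multiset (Place α κ)) (σ : Lbl α)
    (m' : Multiset (Place α κ)) : Prop :=
  Tr env m σ m' ∧ ∀ x ∈ σ, x.unres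

/-- First projection of a linking. -/
def pi1 (l : Multiset (Place α κ × Place α κ)) : Multiset (Place α κ) :=
  l.map Prod.fst

/-- Second projection of a linking. -/
def pi2 (l : Multiset (Place α κ × Place α κ)) : Multiset (Place α κ) :=
  l.map Prod.snd

/-- Structure-preserving bisimulation on the net `N_FNM`. -/
def IsSPB (env : κ → FNM α κ) (R : Set (Multiset (Place α κ × Place α κ))) : Prop :=
  ∀ l ∈ R, ∀ c ≤ l,
    (∀ σ m1, NetTr env (pi1 c) σ m1 →
      ∃ m2 cb, NetTr env (pi2 c) σ m2 ∧
        pi1 cb = m1 ∧ pi2 cb = m2 ∧ l - c + cb ∈ R) ∧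
    (∀ σ m2, NetTr env (pi2 c) σ m2 →
      ∃ m1 cb, NetTr env (pi1 c) σ m1 ∧
        pi1 cb = m1 ∧ pi2 cb = m2 ∧ l - c + cb ∈ R)

/-- `p ~sp q`: some structure-preserving bisimulation contains a linking
projecting on `dec(p)` and `dec(q)`. -/
def SPEq (env : κ → FNM α κ) (p q : FNM α κ) : Prop :=
  ∃ R, IsSPB env R ∧ ∃ l ∈ R,
    pi1 l = dec (fun _ => false) p ∧ pi2 l = dec (fun _ => false) q

end FNM

/-!
A place `a̲.p` or `p + r` has no transitions other than those it inherits from `dec p` and `dec r`,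
since a synchronization consumes at least two tokens. The linking of two such places is a single
pair, whose only nonempty sublinking is itself, so one step from it leads into a linking of the
sp-bisimulations witnessing the equivalence of the components. Adding that pair to the union of
these sp-bisimulations therefore yields an sp-bisimulation again.
-/

namespace FNM

variable {α κ : Type}

/-- The relation on markings induced by a set `R` of linkings: `m₁` and `m₂` are the two projections
of a linking in `R`. -/
def Linked (R : Set (Multiset (Place α κ × Place α κ))) (m₁ m₂ : Multiset (Place α κ)) : Prop :=
  ∃ l ∈ R, pi1 l = m₁ ∧ pi2 l = m₂

namespace Linked

variable {R S : Set (Multiset (Place α κ × Place α κ))} {m₁ m₂ : Multiset (Place α κ)}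

theorem mono (hRS : R ⊆ S) (h : Linked R m₁ m₂) : Linked S m₁ m₂ :=
  let ⟨l, hl, h₁₂⟩ := h
  ⟨l, hRS hl, h₁₂⟩

theorem refl (hR : ∀ m : Multiset (Place α κ), (m.map fun x ↦ (x, x)) ∈ R)
    (m : Multiset (Place α κ)) : Linked R m m :=
  ⟨_, hR m, by simp [pi1], by simp [pi2]⟩

end Linked

/-- The linkings that pair places with themselves only: the identity relation, as a set of linkings,
which witnesses reflexivity of sp-bisimilarity. -/
def idLinkings : Set (Multiset (Place α κ × Place α κ)) :=
  {l | ∀ x ∈ l, x.1 = x.2}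

theorem map_diag_mem_idLinkings (m : Multiset (Place α κ)) :
    (m.map fun x ↦ (x, x)) ∈ idLinkings := by
  intro x hx
  obtain ⟨y, -, rfl⟩ := Multiset.mem_map.mp hx
  rfl

section Transitions

variable [DecidableEq α] {env : κ → FNM α κ} {σ : Lbl α} {m m' m₁ m₂ : Multiset (Place α κ)}

theorem Tr.pre_ne_zero (h : Tr env m σ m') : m ≠ 0 := by
  induction h with
  | scom _ _ _ _ _ _ _ _ _ _ _ ih₁ _ => exact fun h0 ↦ ih₁ (add_eq_zero.mp h0).1
  | _ => exact Multiset.singleton_ne_zero _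

theorem Tr.add_pre_ne_singleton {σ₁ σ₂ : Lbl α} {n₁ n₂ : Multiset (Place α κ)}
    (h₁ : Tr env m₁ σ₁ n₁) (h₂ : Tr env m₂ σ₂ n₂) (x : Place α κ) : m₁ + m₂ ≠ {x} := by
  intro h
  have hcard := congrArg Multiset.card h
  rw [Multiset.card_add, Multiset.card_singleton] at hcard
  have hpos₁ := Multiset.card_pos.mpr h₁.pre_ne_zero
  have hpos₂ := Multiset.card_pos.mpr h₂.pre_ne_zero
  omega

theorem tr_spref_iff {a : α} {s : FNM α κ} {ρ : α → Bool} :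
    Tr env {(.spref a s, ρ)} σ m' ↔ ∃ σ', σ = .inp a (ρ a) :: σ' ∧ Tr env (dec ρ s) σ' m' := by
  constructor
  · generalize hx : ({(.spref a s, ρ)} : Multiset (Place α κ)) = x
    intro h
    cases h with
    | scom _ _ _ _ _ _ _ h₁ h₂ => exact (h₁.add_pre_ne_singleton h₂ _ hx.symm).elim
    | spref _ _ _ σ' _ h =>
      simp only [Multiset.singleton_inj, Prod.mk.injEq, spref.injEq] at hx
      obtain ⟨⟨rfl, rfl⟩, rfl⟩ := hx
      exact ⟨σ', rfl, h⟩
    | _ => simp at hx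
  · rintro ⟨σ', rfl, h⟩
    exact .spref _ _ _ _ _ h

theorem tr_sum_iff {s t : FNM α κ} {ρ : α → Bool} :
    Tr env {(.sum s t, ρ)} σ m' ↔ Tr env (dec ρ s) σ m' ∨ Tr env (dec ρ t) σ m' := by
  constructor
  · generalize hx : ({(.sum s t, ρ)} : Multiset (Place α κ)) = x
    intro h
    cases h with
    | scom _ _ _ _ _ _ _ h₁ h₂ => exact (h₁.add_pre_ne_singleton h₂ _ hx.symm).elim
    | sum1 _ _ _ _ _ h | sum2 _ _ _ _ _ h =>
      simp only [Multiset.singleton_inj, Prod.mk.injEq, sum.injEq] at hx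
      obtain ⟨⟨rfl, rfl⟩, rfl⟩ := hx
      simp [h]
    | _ => simp at hx
  · rintro (h | h)
    · exact .sum1 _ _ _ _ _ h
    · exact .sum2 _ _ _ _ _ h

/-- The one-sided transfer property of simulations: every net transition of `m₁` is answered by a
net transition of `m₂` with the same label, the markings reached being related by `S`. -/
def Transfer (env : κ → FNM α κ) (S : Multiset (Place α κ) → Multiset (Place α κ) → Prop)
    (m₁ m₂ : Multiset (Place α κ)) : Prop :=
  ∀ σ n₁, NetTr env m₁ σ n₁ → ∃ n₂, NetTr env m₂ σ n₂ ∧ S n₁ n₂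

namespace Transfer

variable {S T : Multiset (Place α κ) → Multiset (Place α κ) → Prop}

theorem mono (hST : ∀ m₁ m₂, S m₁ m₂ → T m₁ m₂) (h : Transfer env S m₁ m₂) :
    Transfer env T m₁ m₂ := fun σ n₁ ht ↦
  let ⟨n₂, ht', hS⟩ := h σ n₁ ht
  ⟨n₂, ht', hST _ _ hS⟩

theorem refl (hS : ∀ m, S m m) (m : Multiset (Place α κ)) : Transfer env S m m :=
  fun _ n ht ↦ ⟨n, ht, hS n⟩

theorem zero_left : Transfer env S 0 m := fun _ _ ht ↦ (ht.1.pre_ne_zero rfl).elim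

variable {ρ : α → Bool} {p q r s : FNM α κ}

theorem spref (a : α) (h : Transfer env S (dec ρ p) (dec ρ q)) :
    Transfer env S {(.spref a p, ρ)} {(.spref a q, ρ)} := by
  rintro _ n ⟨ht, hu⟩
  obtain ⟨σ, rfl, hp⟩ := tr_spref_iff.mp ht
  obtain ⟨n', ⟨ht', -⟩, hS⟩ := h σ n ⟨hp, fun x hx ↦ hu x (List.mem_cons_of_mem _ hx)⟩
  exact ⟨n', ⟨tr_spref_iff.mpr ⟨σ, rfl, ht'⟩, hu⟩, hS⟩

theorem sum (hpq : Transfer env S (dec ρ p) (dec ρ q)) (hrs : Transfer env S (dec ρ r) (dec ρ s)) :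
    Transfer env S {(.sum p r, ρ)} {(.sum q s, ρ)} := by
  rintro σ n ⟨ht, hu⟩
  rcases tr_sum_iff.mp ht with ht | ht
  · obtain ⟨n', ⟨ht', -⟩, hS⟩ := hpq σ n ⟨ht, hu⟩
    exact ⟨n', ⟨tr_sum_iff.mpr (.inl ht'), hu⟩, hS⟩
  · obtain ⟨n', ⟨ht', -⟩, hS⟩ := hrs σ n ⟨ht, hu⟩
    exact ⟨n', ⟨tr_sum_iff.mpr (.inr ht'), hu⟩, hS⟩

end Transfer

/-- The two-sided transfer property of bisimulations: `m₁` and `m₂` answer each other's net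
transitions, reaching markings linked by `R`. -/
def Matched (env : κ → FNM α κ) (R : Set (Multiset (Place α κ × Place α κ)))
    (m₁ m₂ : Multiset (Place α κ)) : Prop :=
  Transfer env (Linked R) m₁ m₂ ∧ Transfer env (flip (Linked R)) m₂ m₁

namespace Matched

variable {R S : Set (Multiset (Place α κ × Place α κ))}

theorem mono (hRS : R ⊆ S) (h : Matched env R m₁ m₂) : Matched env S m₁ m₂ :=
  ⟨h.1.mono fun _ _ ↦ .mono hRS, h.2.mono fun _ _ ↦ .mono hRS⟩

theorem refl (hR : ∀ m : Multiset (Place α κ), (m.map fun x ↦ (x, x)) ∈ R)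
    (m : Multiset (Place α κ)) : Matched env R m m :=
  ⟨.refl (.refl hR) m, .refl (S := flip _) (Linked.refl hR) m⟩

theorem zero : Matched env R 0 0 := ⟨.zero_left, .zero_left⟩

variable {ρ : α → Bool} {p q r s : FNM α κ}

theorem spref (a : α) (h : Matched env R (dec ρ p) (dec ρ q)) :
    Matched env R {(.spref a p, ρ)} {(.spref a q, ρ)} :=
  ⟨h.1.spref a, h.2.spref a⟩

theorem sum (hpq : Matched env R (dec ρ p) (dec ρ q)) (hrs : Matched env R (dec ρ r) (dec ρ s)) :
    Matched env R {(.sum p r, ρ)} {(.sum q s, ρ)} :=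
  ⟨hpq.1.sum hrs.1, hpq.2.sum hrs.2⟩

end Matched

end Transitions

section Bisimilarity

variable [DecidableEq α] [DecidableEq κ] [Fintype α] {env : κ → FNM α κ}
  {R S : Set (Multiset (Place α κ × Place α κ))}

theorem isSPB_iff_matched :
    IsSPB env R ↔ ∀ l ∈ R, ∀ c ≤ l, Matched env {d | l - c + d ∈ R} (pi1 c) (pi2 c) := by
  simp only [IsSPB, Matched, Transfer, Linked, flip, Set.mem_ofPred_eq]
  grind

namespace IsSPB

theorem matched (hR : IsSPB env R) {l : Multiset (Place α κ × Place α κ)} (hl : l ∈ R) :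
    Matched env R (pi1 l) (pi2 l) := by
  simpa using isSPB_iff_matched.mp hR l hl l le_rfl

theorem union (hR : IsSPB env R) (hS : IsSPB env S) : IsSPB env (R ∪ S) := by
  rw [isSPB_iff_matched] at *
  rintro l (hl | hl) c hc
  · exact (hR l hl c hc).mono fun _ ↦ .inl
  · exact (hS l hl c hc).mono fun _ ↦ .inr

theorem insert_singleton {x y : Place α κ} (hR : IsSPB env R) (h : Matched env R {x} {y}) :
    IsSPB env (insert {(x, y)} R) := by
  rw [isSPB_iff_matched] at *
  rintro l (rfl | hl) c hc
  · rcases Multiset.le_singleton.mp hc with rfl | rfl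
    · exact .zero
    · exact h.mono fun d hd ↦ .inr (by simpa using hd)
  · exact (hR l hl c hc).mono fun _ ↦ .inr

variable (env) in
theorem idLinkings : IsSPB env idLinkings := by
  rw [isSPB_iff_matched]
  intro l hl c hc
  have hpi : pi1 c = pi2 c :=
    Multiset.map_congr rfl fun x hx ↦ hl x (Multiset.mem_of_le hc hx)
  rw [hpi]
  refine .refl (fun m ↦ ?_) _
  intro x hx
  rcases Multiset.mem_add.mp hx with hx | hx
  · exact hl x (Multiset.mem_of_le (Multiset.sub_le_self _ _) hx)
  · exact map_diag_mem_idLinkings m x hx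

end IsSPB

namespace SPEq

variable {p q r s : FNM α κ}

theorem exists_matched (h : SPEq env p q) :
    ∃ R, IsSPB env R ∧ Matched env R (dec (fun _ ↦ false) p) (dec (fun _ ↦ false) q) := by
  obtain ⟨R, hR, l, hl, hp, hq⟩ := h
  exact ⟨R, hR, hp ▸ hq ▸ hR.matched hl⟩

theorem of_matched {x y : Place α κ} (hR : IsSPB env R) (h : Matched env R {x} {y})
    (hp : dec (fun _ ↦ false) p = {x}) (hq : dec (fun _ ↦ false) q = {y}) : SPEq env p q :=
  ⟨_, hR.insert_singleton h, {(x, y)}, Set.mem_insert _ _, by simp [pi1, hp], by simp [pi2, hq]⟩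

theorem refl (env : κ → FNM α κ) (p : FNM α κ) : SPEq env p p :=
  ⟨_, .idLinkings env, Linked.refl map_diag_mem_idLinkings _⟩

theorem spref (h : SPEq env p q) (a : α) : SPEq env (.spref a p) (.spref a q) := by
  obtain ⟨R, hR, hpq⟩ := h.exists_matched
  exact .of_matched hR (hpq.spref a) rfl rfl

theorem sum (hpq : SPEq env p q) (hrs : SPEq env r s) : SPEq env (.sum p r) (.sum q s) := by
  obtain ⟨R, hR, hpq⟩ := hpq.exists_matched
  obtain ⟨S, hS, hrs⟩ := hrs.exists_matched
  have hsum := (hpq.mono Set.subset_union_left).sum (hrs.mono Set.subset_union_right)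
  exact .of_matched (hR.union hS) hsum rfl rfl

end SPEq

end Bisimilarity

end FNM

open FNM in
theorem speq_congr_spref_sum_general {α κ : Type} [DecidableEq α] [DecidableEq κ] [Fintype α]
    (env : κ → FNM α κ) (p q : FNM α κ) (h : SPEq env p q) :
    (∀ a : α, SPEq env (FNM.spref a p) (FNM.spref a q)) ∧
    (∀ r s : FNM α κ, SPEq env r s → SPEq env (FNM.sum p r) (FNM.sum q s)) :=
  ⟨h.spref, fun _ _ ↦ h.sum⟩

open FNM in
/-- structure-preserving bisimilarity is a congruence for
strong prefixing and for choice: for FNM guarded processes `p, q` with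
`p ~sp q`, (i) `a̲.p ~sp a̲.q` for every input action `a`, and
(ii) `p + r ~sp q + r` for every FNM guarded process `r`. -/
theorem speq_congr_spref_sum {α κ : Type} [DecidableEq α] [DecidableEq κ]
    [Fintype α] [Finite κ]
    (env : κ → FNM α κ) (henv : ∀ c, Grd (env c) ∧ VarFree (env c))
    (p q : FNM α κ) (hp : Grd p) (hq : Grd q)
    (hpv : VarFree p) (hqv : VarFree q)
    (h : SPEq env p q) :
    (∀ a : α, SPEq env (FNM.spref a p) (FNM.spref a q)) ∧
    (∀ r : FNM α κ, Grd r → VarFree r →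
      SPEq env (FNM.sum p r) (FNM.sum q r)) := by
  obtain ⟨hspref, hsum⟩ := speq_congr_spref_sum_general env p q h
  exact ⟨hspref, fun r _ _ ↦ hsum r r (.refl env r)⟩
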